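/- Given block matrices A, B, C, K of appropriate block-diagonal/block lower triangular structure and the block downshift operator Z, define Φ_xx = (I - Z(A + BKC))^{-1}, Φ_xy = Φ_xx·Z·B·K, Φ_ux = K·C·Φ_xx, and Φ_uy = K + K·C·Φ_xx·Z·B·K. Then all four matrices Φ_xx, Φ_xy, Φ_ux, Φ_uy are block lower triangular. -/

import Mathlib

open Matrix MeasureTheory

/-- A matrix with `(T+1)×(T+1)` blocks is block lower triangular if every block
strictly above the block diagonal is zero. -/
def IsBLT {T a b : ℕ} (M : Matrix (Fin (T+1) × Fin a) (Fin (T+1) × Fin b) ℝ) : Prop :=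
  ∀ p q, p.1 < q.1 → M p q = 0

/-- Strictly block lower triangular: all blocks on and above the block diagonal vanish. -/
def IsStrictBLT {T a b : ℕ} (M : Matrix (Fin (T+1) × Fin a) (Fin (T+1) × Fin b) ℝ) : Prop :=
  ∀ p q, p.1 ≤ q.1 → M p q = 0

/-- Block diagonal: off-diagonal blocks vanish. -/
def IsBD {T a b : ℕ} (M : Matrix (Fin (T+1) × Fin a) (Fin (T+1) × Fin b) ℝ) : Prop :=
  ∀ p q, p.1 ≠ q.1 → M p q = 0

/-- `lead t ht M` is the leading principal block submatrix `M(:t)` consisting of the first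
`t+1` block rows and block columns of `M`. -/
def lead {T a b : ℕ} (t : ℕ) (ht : t + 1 ≤ T + 1)
    (M : Matrix (Fin (T+1) × Fin a) (Fin (T+1) × Fin b) ℝ) :
    Matrix (Fin (t+1) × Fin a) (Fin (t+1) × Fin b) ℝ :=
  M.submatrix (Prod.map (Fin.castLE ht) id) (Prod.map (Fin.castLE ht) id)

/-- The block downshift operator: `T` identity `n×n` blocks on the first block subdiagonal,
zeros elsewhere. -/
def dshift (n T : ℕ) : Matrix (Fin (T+1) × Fin n) (Fin (T+1) × Fin n) ℝ :=
  fun p q => if (p.1 : ℕ) = (q.1 : ℕ) + 1 ∧ p.2 = q.2 then 1 else 0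

theorem IsBLT.mul_aux {T a b c : ℕ} {M : Matrix (Fin (T+1) × Fin a) (Fin (T+1) × Fin b) ℝ}
    {N : Matrix (Fin (T+1) × Fin b) (Fin (T+1) × Fin c) ℝ} (hM : IsBLT M) (hN : IsBLT N) :
    IsBLT (M * N) := by
  intro p q hpq
  rw [Matrix.mul_apply]
  refine Finset.sum_eq_zero fun r _ => ?_
  rcases lt_or_ge p.1 r.1 with h | h
  · rw [hM p r h, zero_mul]
  · rw [hN r q (lt_of_le_of_lt h hpq), mul_zero]

theorem IsBLT.add_aux {T a b : ℕ} {M N : Matrix (Fin (T+1) × Fin a) (Fin (T+1) × Fin b) ℝ}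
    (hM : IsBLT M) (hN : IsBLT N) : IsBLT (M + N) := by
  intro p q hpq
  rw [Matrix.add_apply, hM p q hpq, hN p q hpq, add_zero]

theorem IsBD.isBLT_aux {T a b : ℕ} {M : Matrix (Fin (T+1) × Fin a) (Fin (T+1) × Fin b) ℝ}
    (hM : IsBD M) : IsBLT M := fun p q hpq => hM p q hpq.ne

theorem isBLT_dshift_aux (n T : ℕ) : IsBLT (dshift n T) := by
  intro p q hpq
  have h : (p.1 : ℕ) < q.1 := hpq
  unfold dshift
  rw [if_neg]
  rintro ⟨h1, -⟩
  omega

theorem IsBLT.inv_aux {T a : ℕ} {M : Matrix (Fin (T+1) × Fin a) (Fin (T+1) × Fin a) ℝ}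
    (hM : IsBLT M) : IsBLT M⁻¹ := by
  by_cases hu : IsUnit M.det
  · letI := Matrix.invertibleOfIsUnitDet M hu
    have hT : Matrix.BlockTriangular M (fun i => OrderDual.toDual i.1) :=
      fun i j hij => hM i j (OrderDual.toDual_lt_toDual.mp hij)
    intro p q hpq
    exact Matrix.blockTriangular_inv_of_blockTriangular hT (OrderDual.toDual_lt_toDual.mpr hpq)
  · rw [Matrix.nonsing_inv_apply_not_isUnit M hu]
    intro p q _
    rfl

theorem stmt6 {T n m p : ℕ}
    (A : Matrix (Fin (T+1) × Fin n) (Fin (T+1) × Fin n) ℝ)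
    (B : Matrix (Fin (T+1) × Fin n) (Fin (T+1) × Fin p) ℝ)
    (C : Matrix (Fin (T+1) × Fin m) (Fin (T+1) × Fin n) ℝ)
    (K : Matrix (Fin (T+1) × Fin p) (Fin (T+1) × Fin m) ℝ)
    (hA : IsBD A) (hB : IsBD B) (hC : IsBD C) (hK : IsBLT K)
    (Φxx : Matrix (Fin (T+1) × Fin n) (Fin (T+1) × Fin n) ℝ)
    (Φxy : Matrix (Fin (T+1) × Fin n) (Fin (T+1) × Fin m) ℝ)
    (Φux : Matrix (Fin (T+1) × Fin p) (Fin (T+1) × Fin n) ℝ)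
    (Φuy : Matrix (Fin (T+1) × Fin p) (Fin (T+1) × Fin m) ℝ)
    (hΦxx : Φxx = (1 - dshift n T * (A + B * K * C))⁻¹)
    (hΦxy : Φxy = Φxx * dshift n T * B * K)
    (hΦux : Φux = K * C * Φxx)
    (hΦuy : Φuy = K + K * C * Φxx * dshift n T * B * K) :
    IsBLT Φxx ∧ IsBLT Φxy ∧ IsBLT Φux ∧ IsBLT Φuy := by 
  have hZ := isBLT_dshift_aux n T
  have hB' := hB.isBLT_aux
  have hC' := hC.isBLT_aux
  have hx : IsBLT Φxx := by
    rw [hΦxx]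
    apply IsBLT.inv_aux
    have hP := hZ.mul_aux (hA.isBLT_aux.add_aux ((hB'.mul_aux hK).mul_aux hC'))
    intro i j hij
    rw [Matrix.sub_apply, hP i j hij, sub_zero, Matrix.one_apply_ne]
    rintro rfl
    exact lt_irrefl _ hij
  have hux := (hK.mul_aux hC').mul_aux hx
  refine ⟨hx, ?_, ?_, ?_⟩
  · rw [hΦxy]
    exact ((hx.mul_aux hZ).mul_aux hB').mul_aux hK
  · rw [hΦux]
    exact hux
  · rw [hΦuy]
    exact hK.add_aux (((hux.mul_aux hZ).mul_aux hB').mul_aux hK)
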